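/- On the event E, under Condition (H), suppose the noise-stability bound (NS) holds at every iteration τ ≤ t. Then, for every iteration t ≤ T and every filter r ∈ [m], the signal coordinate is uniformly bounded: w_{r,1}^{(t)} ≤ 3·(log T)^{1/3}/α. -/

import Mathlib

open Finset MeasureTheory ProbabilityTheory
open scoped ENNReal NNReal

noncomputable section

namespace AD

/-- Cubic ReLU activation. -/
def phi (z : ℝ) : ℝ := (max 0 z) ^ 3

/-- Negative sigmoid `ψ(z) = 1/(1+e^z)`. -/
def psi (z : ℝ) : ℝ := 1 / (1 + Real.exp z)

/-- Logistic loss `ℓ(z) = log(1+e^{-z})`. -/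
def lloss (z : ℝ) : ℝ := Real.log (1 + Real.exp (-z))

/-- Logistic sigmoid `σ(z) = 1/(1+e^{-z})`. -/
def sigm (z : ℝ) : ℝ := 1 / (1 + Real.exp (-z))

/-- Euclidean inner product on `Fin d → ℝ`. -/
def dot {d : ℕ} (a b : Fin d → ℝ) : ℝ := ∑ k, a k * b k

/-- Squared Euclidean norm. -/
def sqnorm {d : ℕ} (a : Fin d → ℝ) : ℝ := dot a a

/-- First standard basis vector `e₁` (the learnable feature `u`). -/
def e1 (d : ℕ) (hd : 0 < d) : Fin d → ℝ := fun k => if k = (⟨0, hd⟩ : Fin d) then 1 else 0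

/-- Last standard basis vector `e_d` (the unlearnable feature `v`). -/
def eLast (d : ℕ) (_hd : 0 < d) : Fin d → ℝ := fun k => if (k : ℕ) = d - 1 then 1 else 0

/-- The two-layer student network
`f_W(X) = ∑_r ∑_p [φ(⟨w_r,x_p⟩) − φ(−⟨w_r,x_p⟩)]`. -/
def netOut {m P d : ℕ} (w : Fin m → Fin d → ℝ) (X : Fin P → Fin d → ℝ) : ℝ :=
  ∑ r, ∑ p, (phi (dot (w r) (X p)) - phi (-(dot (w r) (X p))))

/-- The concentration event `E` of the paper, i.e. properties (P1)–(P8), stated for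
training patches `x`, initialization `w0`, labels `y` and signal-patch indices `sig`. -/
def EventEOn (N m P d : ℕ) (hd : 0 < d) (sigman sigma0 delta : ℝ)
    (y : Fin N → ℝ) (sig : Fin N → Fin P)
    (x : Fin N → Fin P → Fin d → ℝ) (w0 : Fin m → Fin d → ℝ) : Prop :=
  -- (P1) noise-patch norms
  (∀ i j, j ≠ sig i →
      sigman ^ 2 * d / 2 ≤ sqnorm (x i j) ∧ sqnorm (x i j) ≤ 3 * sigman ^ 2 * d / 2) ∧
  -- (P2) pairwise noise inner products
  (∀ i k j q, j ≠ sig i → q ≠ sig k → ((i, j) : Fin N × Fin P) ≠ (k, q) →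
      |dot (x i j) (x k q)| ≤
        2 * sigman ^ 2 * Real.sqrt ((d : ℝ) * Real.log ((16 : ℝ) * N ^ 2 * P ^ 2 / delta))) ∧
  -- (P3) sup-norm of noise patches
  (∀ i j, j ≠ sig i → ∀ kk : Fin d,
      |x i j kk| ≤ sigman * Real.sqrt (2 * Real.log ((16 : ℝ) * d * N * P / delta))) ∧
  -- (P4) initialization norms
  (∀ r, Real.sqrt (sqnorm (w0 r)) ≤ 2 * sigma0 * Real.sqrt d) ∧
  -- (P5) initialization signal correlation
  (∀ r, |dot (w0 r) (e1 d hd)| ≤ sigma0 * Real.sqrt (2 * Real.log ((16 : ℝ) * m / delta))) ∧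
  -- (P6) initialization noise correlations
  (∀ r i j, j ≠ sig i →
      |dot (w0 r) (x i j)| ≤
        2 * sigma0 * sigman * Real.sqrt ((d : ℝ) * Real.log ((16 : ℝ) * N * m * P / delta))) ∧
  -- (P7) maximal initial signal alignment
  (∃ r, sigma0 / 2 ≤ dot (w0 r) (e1 d hd)) ∧
  -- (P8) maximal initial noise alignment
  (∀ i j, j ≠ sig i → ∃ r, sigma0 * sigman * Real.sqrt d / 4 ≤ y i * dot (w0 r) (x i j))
structure Setting where
  N : ℕ
  m : ℕ
  P : ℕ
  d : ℕ
  T : ℕ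
  hN : 0 < N
  hm : 0 < m
  hP : 0 < P
  hd : 0 < d
  alpha : ℝ
  sigman : ℝ
  sigma0 : ℝ
  eta : ℝ
  eps : ℝ
  delta : ℝ
  halpha : 0 < alpha
  hsigman : 0 < sigman
  hsigma0 : 0 < sigma0
  heta : 0 < eta
  heps : 0 < eps
  hepsalpha : eps < alpha
  hdelta0 : 0 < delta
  hdelta1 : delta < 1
  /-- labels -/
  y : Fin N → ℝ
  hy : ∀ i, y i = 1 ∨ y i = -1
  /-- signal patch index -/
  sig : Fin N → Fin P
  /-- learnable samples -/
  SL : Finset (Fin N)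
  /-- unlearnable samples -/
  SU : Finset (Fin N)
  hunion : SL ∪ SU = Finset.univ
  hdisj : Disjoint SL SU
  /-- training patches -/
  x : Fin N → Fin P → Fin d → ℝ
  hsigL : ∀ i ∈ SL, x i (sig i) = (alpha * y i) • e1 d hd
  hsigU : ∀ i ∈ SU, x i (sig i) = (alpha * y i) • eLast d hd
  hnoiseU : ∀ i j, j ≠ sig i → dot (x i j) (e1 d hd) = 0
  hnoiseV : ∀ i j, j ≠ sig i → dot (x i j) (eLast d hd) = 0
  /-- weight trajectory -/
  w : ℕ → Fin m → Fin d → ℝ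
  hwperp : ∀ t r, dot (w t r) (eLast d hd) = 0
  /-- adversarial training examples at each iteration -/
  xadv : ℕ → Fin N → Fin P → Fin d → ℝ
  hadvnoise : ∀ t i j, j ≠ sig i → xadv t i j = x i j
  hadvspan : ∀ t i, ∃ c : ℝ, xadv t i (sig i) - x i (sig i) = c • x i (sig i)
  hadvlinf : ∀ t i p k, |xadv t i p k - x i p k| ≤ eps
  hadvlearn : ∀ t : ℕ, ∀ i ∈ SL,
    alpha - eps ≤ y i * dot (xadv t i (sig i)) (e1 d hd) ∧
      y i * dot (xadv t i (sig i)) (e1 d hd) ≤ alpha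

namespace Setting

variable (S : Setting)

/-- Adversarial margin `y_i f_{W^{(t)}}(X̃_i^{(t)})`. -/
def marg (t : ℕ) (i : Fin S.N) : ℝ := S.y i * netOut (S.w t) (S.xadv t i)

/-- Signal coordinate `w_{r,1}^{(t)}`. -/
def wsig (t : ℕ) (r : Fin S.m) : ℝ := S.w t r ⟨0, S.hd⟩

/-- Unlearnable fraction `p_un = |S_U|/N`. -/
def pun : ℝ := (S.SU.card : ℝ) / S.N

/-- The adversarial-training gradient-descent dynamics. -/
def ATDyn : Prop :=
  ∀ t r, S.w (t + 1) r = S.w t r +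
    (3 * S.eta / S.N) •
      ∑ i : Fin S.N, (psi (S.marg t i) * S.y i) •
        ∑ p : Fin S.P, (dot (S.w t r) (S.xadv t i p)) ^ 2 • S.xadv t i p

/-- The signed gradient weight of sample `i` at iteration `t` under adversarial
distillation from teacher logits `fT`. -/
def gAD (fT : Fin S.N → ℝ) (t : ℕ) (i : Fin S.N) : ℝ :=
  sigm (S.y i * fT i) * psi (S.marg t i) - sigm (-(S.y i * fT i)) * psi (-(S.marg t i))

/-- The adversarial-distillation gradient-descent dynamics. -/
def ADDyn (fT : Fin S.N → ℝ) : Prop :=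
  ∀ t r, S.w (t + 1) r = S.w t r +
    (3 * S.eta / S.N) •
      ∑ i : Fin S.N, (S.gAD fT t i * S.y i) •
        ∑ p : Fin S.P, (dot (S.w t r) (S.xadv t i p)) ^ 2 • S.xadv t i p

/-- Noise coefficients `ρ_{i,j,r}^{(t)}` (adversarial training). -/
def rho (i : Fin S.N) (j : Fin S.P) (r : Fin S.m) : ℕ → ℝ
  | 0 => 0
  | t + 1 => rho i j r t + (3 * S.eta / S.N) * psi (S.marg t i) * (dot (S.w t r) (S.x i j)) ^ 2

/-- Noise coefficients under adversarial distillation. -/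
def rhoAD (fT : Fin S.N → ℝ) (i : Fin S.N) (j : Fin S.P) (r : Fin S.m) : ℕ → ℝ
  | 0 => 0
  | t + 1 => rhoAD fT i j r t + (3 * S.eta / S.N) * S.gAD fT t i * (dot (S.w t r) (S.x i j)) ^ 2

/-- The event `E` for a setting. -/
def EventE : Prop :=
  EventEOn S.N S.m S.P S.d S.hd S.sigman S.sigma0 S.delta S.y S.sig S.x (S.w 0)

/-- Condition (H): the parameter requirements of Condition 4.1 of the paper
(without the unlearnable-fraction regime item, which is imposed separately). -/
def CondH (C : ℝ) : Prop :=
  1 ≤ C ∧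
  -- training horizon
  C * S.N / (S.eta * S.sigma0 * S.sigman ^ 3 * ((S.d : ℝ) * Real.sqrt S.d)) ≤ (S.T : ℝ) ∧
  -- dimension
  C * S.m ^ 2 * S.P ^ 2 * S.N ^ 2 *
      (Real.log ((S.T : ℝ) * S.N * S.m * S.P / S.delta)) ^ 4 ≤ (S.d : ℝ) ∧
  -- signal strength
  C * S.sigman * Real.sqrt S.d * Real.log ((S.T : ℝ) * S.N * S.m * S.P / S.delta) /
      (((S.N : ℝ) * (1 - S.pun)) ^ ((1 : ℝ) / 3)) ≤ S.alpha ∧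
  -- initialization scale
  S.sigma0 ≤
    C⁻¹ *
        min (min (1 / ((S.m : ℝ) ^ ((2 : ℝ) / 3) * (S.P : ℝ) ^ ((2 : ℝ) / 3) *
            S.sigman * Real.sqrt S.d))
          (1 / (S.alpha * (S.m : ℝ) ^ ((2 : ℝ) / 3))))
          (1 / (S.sigman * S.m ^ 2 * Real.sqrt S.P * S.d)) /
      Real.log ((S.T : ℝ) * S.d * S.N * S.m * S.P / S.delta) ∧
  -- learning rate
  S.eta ≤
    C⁻¹ * min (min (1 / (S.alpha ^ 3 * S.sigma0)) (1 / (S.sigman ^ 2 * S.d))) (1 / S.alpha ^ 2) /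
      Real.log ((S.T : ℝ) * S.N * S.m * S.P / S.delta) ∧
  -- adversarial budget
  C * S.sigman * S.m * Real.sqrt S.P * Real.log ((S.T : ℝ) * S.d * S.N * S.P / S.delta) ≤ S.eps ∧
  S.eps < C⁻¹ * min S.alpha (1 / (S.m * S.sigma0 * S.d)) ∧
  -- width and number of patches
  C * Real.log ((S.N : ℝ) * S.P / S.delta) ≤ (S.m : ℝ) ∧
  (S.m : ℝ) ≤ C * Real.log S.d ^ C ∧
  2 ≤ S.P ∧ (S.P : ℝ) ≤ C

/-- The sparse-unlearnable regime of Condition 4.1. -/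
def SparseRegime (C : ℝ) : Prop :=
  C / S.N ≤ S.pun ∧ S.pun ≤ C⁻¹ * Real.log S.d / S.N ∧
  C * S.m * S.P * Real.log ((S.T : ℝ) * S.d * S.N * S.m * S.P / S.delta) ≤ (S.N : ℝ)

/-- The noise-stability bound (NS) on learnable samples at iteration `t`. -/
def NS (t : ℕ) : Prop :=
  ∀ r : Fin S.m, ∀ i ∈ S.SL, ∀ j, j ≠ S.sig i →
    |dot (S.w t r) (S.x i j)| ≤
      3 * S.sigma0 * S.sigman *
          Real.sqrt ((S.d : ℝ) * Real.log ((16 : ℝ) * S.N * S.m * S.P / S.delta)) +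
        21 * S.pun * S.N * S.P * Real.log S.T ^ ((1 : ℝ) / 3) / Real.sqrt S.d *
          Real.sqrt (Real.log ((16 : ℝ) * S.N ^ 2 * S.P ^ 2 / S.delta))

/-- The signal-learning hitting time `T₀`. -/
def T0 (C0 : ℝ) : ℕ :=
  sInf {t : ℕ | ∃ r, C0 / (S.alpha * (S.m : ℝ) ^ ((1 : ℝ) / 3)) < S.wsig t r}

/-- Maximum of the noise coefficients over unlearnable noise patches. -/
def rhoMaxSU (t : ℕ) : ℝ :=
  sSup {z : ℝ | ∃ r : Fin S.m, ∃ k ∈ S.SU, ∃ q, q ≠ S.sig k ∧ z = S.rho k q r t}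

/-- Shifted noise coefficients `ρ̂_{i,j,r}^{(t)}`. -/
def rhoHat (i : Fin S.N) (j : Fin S.P) (r : Fin S.m) (t : ℕ) : ℝ :=
  S.rho i j r t + S.y i * dot (S.w 0 r) (S.x i j) / sqnorm (S.x i j)

/-- Maximum shifted noise coefficient over unlearnable noise patches. -/
def rhoHatMax (t : ℕ) : ℝ :=
  sSup {z : ℝ | ∃ r : Fin S.m, ∃ k ∈ S.SU, ∃ q, q ≠ S.sig k ∧ z = S.rhoHat k q r t}

/-- The noise-memorization hitting time `T₁`. -/
def T1 (C1 : ℝ) : ℕ :=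
  sInf {t : ℕ | C1 / (((S.m : ℝ) * S.P) ^ ((1 : ℝ) / 3) * S.sigman ^ 2 * S.d) < S.rhoHatMax t}

/-- The Good-Teacher horizon `T_max`. -/
def Tmax : ℝ :=
  S.N / (1000 * S.eta * S.m * S.P * S.sigma0 ^ 4 * S.sigman ^ 6 * (S.d : ℝ) ^ 3 *
    Real.log ((16 : ℝ) * S.N * S.m * S.P / S.delta) ^ 2)

end Setting

lemma phi_sub_phi_neg (z : ℝ) : phi z - phi (-z) = z ^ 3 := by
  unfold phi
  rcases le_total 0 z with h | h
  · rw [max_eq_right h, max_eq_left (by linarith)]; ring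
  · rw [max_eq_left h, max_eq_right (by linarith)]; ring

lemma psi_pos (z : ℝ) : 0 < psi z := by
  unfold psi; positivity

lemma psi_le_one (z : ℝ) : psi z ≤ 1 := by
  unfold psi
  rw [div_le_one (by positivity)]
  linarith [Real.exp_pos z]

lemma psi_le_exp_neg (z : ℝ) : psi z ≤ Real.exp (-z) := by
  unfold psi
  rw [Real.exp_neg, ← one_div]
  exact one_div_le_one_div_of_le (Real.exp_pos z) (by linarith)

lemma dot_smul_right {d : ℕ} (a b : Fin d → ℝ) (c : ℝ) : dot a (c • b) = c * dot a b := by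
  simp only [dot, Pi.smul_apply, smul_eq_mul, Finset.mul_sum]
  exact Finset.sum_congr rfl fun k _ => by ring

lemma dot_e1 {d : ℕ} (hd : 0 < d) (a : Fin d → ℝ) : dot a (e1 d hd) = a ⟨0, hd⟩ := by
  simp [dot, e1]

lemma e1_zero {d : ℕ} (hd : 0 < d) : e1 d hd ⟨0, hd⟩ = 1 := by
  simp [e1]

lemma eLast_zero {d : ℕ} (hd : 0 < d) (h2 : 2 ≤ d) : eLast d hd ⟨0, hd⟩ = 0 := by
  simp only [eLast]
  rw [if_neg (by omega)]

lemma label_mul_self (S : Setting) (i : Fin S.N) : S.y i * S.y i = 1 := by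
  rcases S.hy i with h | h <;> rw [h] <;> norm_num

/-- Signed strength of the adversarial signal patch along the learnable feature. -/
def advSignal (S : Setting) (t : ℕ) (i : Fin S.N) : ℝ :=
  S.y i * dot (S.xadv t i (S.sig i)) (e1 S.d S.hd)

lemma xadv_signal_learnable (S : Setting) (t : ℕ) {i : Fin S.N} (hi : i ∈ S.SL) :
    S.xadv t i (S.sig i) = (S.y i * advSignal S t i) • e1 S.d S.hd := by
  obtain ⟨c, hc⟩ := S.hadvspan t i
  have hx : S.xadv t i (S.sig i) = ((1 + c) * (S.alpha * S.y i)) • e1 S.d S.hd := by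
    rw [sub_eq_iff_eq_add.mp hc, S.hsigL i hi, smul_smul, ← add_smul]
    congr 1; ring
  have hs : S.y i * advSignal S t i = (1 + c) * (S.alpha * S.y i) := by
    unfold advSignal
    rw [← mul_assoc, label_mul_self, one_mul, dot_e1, hx, Pi.smul_apply, e1_zero, smul_eq_mul,
      mul_one]
  rw [hs, hx]

lemma xadv_signal_unlearnable_zero (S : Setting) (h2 : 2 ≤ S.d) (t : ℕ) {i : Fin S.N}
    (hi : i ∈ S.SU) : S.xadv t i (S.sig i) ⟨0, S.hd⟩ = 0 := by
  obtain ⟨c, hc⟩ := S.hadvspan t i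
  rw [sub_eq_iff_eq_add.mp hc, S.hsigU i hi]
  simp [eLast_zero S.hd h2]

lemma xadv_noise_zero (S : Setting) (t : ℕ) {i : Fin S.N} {j : Fin S.P} (hj : j ≠ S.sig i) :
    S.xadv t i j ⟨0, S.hd⟩ = 0 := by
  rw [S.hadvnoise t i j hj, ← dot_e1 S.hd (S.x i j)]
  exact S.hnoiseU i j hj

/-- Gradient descent on the signal coordinate only sees the learnable samples. -/
lemma wsig_succ (S : Setting) (hdyn : S.ATDyn) (h2 : 2 ≤ S.d) (t : ℕ) (r : Fin S.m) :
    S.wsig (t + 1) r = S.wsig t r + 3 * S.eta / S.N *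
      ∑ i ∈ S.SL, psi (S.marg t i) * (S.wsig t r ^ 2 * advSignal S t i ^ 3) := by
  have hterm : ∀ i : Fin S.N, ((psi (S.marg t i) * S.y i) •
      ∑ p : Fin S.P, (dot (S.w t r) (S.xadv t i p)) ^ 2 • S.xadv t i p) ⟨0, S.hd⟩ =
      psi (S.marg t i) * S.y i * ((dot (S.w t r) (S.xadv t i (S.sig i))) ^ 2 *
        S.xadv t i (S.sig i) ⟨0, S.hd⟩) := by
    intro i
    rw [Pi.smul_apply, Finset.sum_apply, smul_eq_mul, Finset.sum_eq_single (S.sig i)]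
    · rfl
    · intro j _ hj
      simp [xadv_noise_zero S t hj]
    · simp
  unfold Setting.wsig
  rw [hdyn t r, Pi.add_apply, Pi.smul_apply, Finset.sum_apply, smul_eq_mul]
  congr 2
  rw [Finset.sum_congr rfl fun i _ => hterm i, ← S.hunion, Finset.sum_union S.hdisj]
  have hU : ∑ i ∈ S.SU, psi (S.marg t i) * S.y i *
      ((dot (S.w t r) (S.xadv t i (S.sig i))) ^ 2 * S.xadv t i (S.sig i) ⟨0, S.hd⟩) = 0 :=
    Finset.sum_eq_zero fun i hi => by rw [xadv_signal_unlearnable_zero S h2 t hi]; ring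
  rw [hU, add_zero]
  refine Finset.sum_congr rfl fun i hi => ?_
  rw [xadv_signal_learnable S t hi, dot_smul_right, dot_e1, Pi.smul_apply, e1_zero, smul_eq_mul]
  have hy := label_mul_self S i
  linear_combination (psi (S.marg t i) * S.w t r ⟨0, S.hd⟩ ^ 2 * advSignal S t i ^ 3 *
    (S.y i * S.y i + 1)) * hy

lemma marg_learnable (S : Setting) (t : ℕ) {i : Fin S.N} (hi : i ∈ S.SL) :
    S.marg t i = ∑ r, (S.wsig t r * advSignal S t i) ^ 3 +
      S.y i * ∑ r, ∑ p ∈ Finset.univ.erase (S.sig i), dot (S.w t r) (S.x i p) ^ 3 := by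
  unfold Setting.marg netOut
  rw [Finset.mul_sum, Finset.mul_sum, ← Finset.sum_add_distrib]
  refine Finset.sum_congr rfl fun r _ => ?_
  simp only [phi_sub_phi_neg]
  rw [← Finset.add_sum_erase _ _ (Finset.mem_univ (S.sig i)), mul_add]
  congr 1
  · rw [xadv_signal_learnable S t hi, dot_smul_right, dot_e1]
    have hy := label_mul_self S i
    unfold Setting.wsig
    linear_combination ((S.w t r ⟨0, S.hd⟩ * advSignal S t i) ^ 3 * (S.y i * S.y i + 1)) * hy
  · congr 1
    refine Finset.sum_congr rfl fun p hp => ?_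
    rw [S.hadvnoise t i p (Finset.ne_of_mem_erase hp)]

lemma advSignal_pos (S : Setting) (t : ℕ) {i : Fin S.N} (hi : i ∈ S.SL) :
    0 < advSignal S t i := by
  have := (S.hadvlearn t i hi).1
  have := S.hepsalpha
  unfold advSignal
  linarith

lemma advSignal_le (S : Setting) (t : ℕ) {i : Fin S.N} (hi : i ∈ S.SL) :
    advSignal S t i ≤ S.alpha := (S.hadvlearn t i hi).2

lemma wsig_monotone (S : Setting) (hdyn : S.ATDyn) (h2 : 2 ≤ S.d) (r : Fin S.m) :
    Monotone fun t => S.wsig t r := by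
  refine monotone_nat_of_le_succ fun t => ?_
  rw [wsig_succ S hdyn h2]
  have : 0 ≤ ∑ i ∈ S.SL, psi (S.marg t i) * (S.wsig t r ^ 2 * advSignal S t i ^ 3) := by
    refine Finset.sum_nonneg fun i hi => ?_
    have := psi_pos (S.marg t i)
    have := advSignal_pos S t hi
    positivity
  have := S.heta
  have : 0 ≤ 3 * S.eta / S.N := by positivity
  nlinarith

/-- One-step growth of the signal coordinate when all learnable `ψ`-weights are at most `q`. -/
lemma wsig_succ_le (S : Setting) (hdyn : S.ATDyn) (h2 : 2 ≤ S.d) (t : ℕ) (r : Fin S.m) {q : ℝ}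
    (hq0 : 0 ≤ q) (hq : ∀ i ∈ S.SL, psi (S.marg t i) ≤ q) :
    S.wsig (t + 1) r ≤ S.wsig t r + 3 * S.eta * q * S.wsig t r ^ 2 * S.alpha ^ 3 := by
  rw [wsig_succ S hdyn h2]
  have hN : (0 : ℝ) < S.N := by exact_mod_cast S.hN
  have hα := S.halpha
  have hη := S.heta
  have hsum : ∑ i ∈ S.SL, psi (S.marg t i) * (S.wsig t r ^ 2 * advSignal S t i ^ 3) ≤
      S.N * (q * (S.wsig t r ^ 2 * S.alpha ^ 3)) := by
    calc _ ≤ ∑ _i ∈ S.SL, q * (S.wsig t r ^ 2 * S.alpha ^ 3) := by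
          refine Finset.sum_le_sum fun i hi => ?_
          have h0 := (advSignal_pos S t hi).le
          have h1 := advSignal_le S t hi
          have := hq i hi
          gcongr
      _ = S.SL.card * (q * (S.wsig t r ^ 2 * S.alpha ^ 3)) := by
          rw [Finset.sum_const, nsmul_eq_mul]
      _ ≤ _ := by
          have : S.SL.card ≤ S.N := by simpa using Finset.card_le_univ S.SL
          gcongr
  calc _ ≤ S.wsig t r + 3 * S.eta / S.N * (S.N * (q * (S.wsig t r ^ 2 * S.alpha ^ 3))) := by
        gcongr
    _ = _ := by field_simp

/-- Lower bound on a learnable margin in terms of a single filter, a lower bound `-κ` on the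
signal cubes of all filters, and a bound `b` on the noise correlations. -/
lemma marg_lower_bound (S : Setting) (t : ℕ) {i : Fin S.N} (hi : i ∈ S.SL) (r : Fin S.m)
    {κ b : ℝ} (hκ0 : 0 ≤ κ) (hb0 : 0 ≤ b) (hκ : ∀ r', -κ ≤ (S.wsig t r' * advSignal S t i) ^ 3)
    (hb : ∀ r', ∀ j, j ≠ S.sig i → |dot (S.w t r') (S.x i j)| ≤ b) :
    (S.wsig t r * advSignal S t i) ^ 3 - S.m * κ - S.m * S.P * b ^ 3 ≤ S.marg t i := by
  rw [marg_learnable S t hi]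
  have hsig : (S.wsig t r * advSignal S t i) ^ 3 - S.m * κ ≤
      ∑ r, (S.wsig t r * advSignal S t i) ^ 3 := by
    have h := Finset.single_le_sum (f := fun r' => (S.wsig t r' * advSignal S t i) ^ 3 + κ)
      (fun r' _ => by linarith [hκ r']) (Finset.mem_univ r)
    rw [Finset.sum_add_distrib] at h
    simp only [Finset.sum_const, Finset.card_univ, Fintype.card_fin, nsmul_eq_mul] at h
    linarith
  have hcube : ∀ r', ∀ p ∈ Finset.univ.erase (S.sig i),
      |dot (S.w t r') (S.x i p) ^ 3| ≤ b ^ 3 := by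
    intro r' p hp
    rw [abs_pow]
    exact pow_le_pow_left₀ (abs_nonneg _) (hb r' p (Finset.ne_of_mem_erase hp)) 3
  have hnoise : |∑ r, ∑ p ∈ Finset.univ.erase (S.sig i), dot (S.w t r) (S.x i p) ^ 3| ≤
      S.m * S.P * b ^ 3 := by
    calc _ ≤ ∑ r, ∑ p ∈ Finset.univ.erase (S.sig i), |dot (S.w t r) (S.x i p) ^ 3| :=
          (Finset.abs_sum_le_sum_abs _ _).trans
            (Finset.sum_le_sum fun _ _ => Finset.abs_sum_le_sum_abs _ _)
      _ ≤ ∑ _r : Fin S.m, ∑ _p ∈ Finset.univ.erase (S.sig i), b ^ 3 :=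
          Finset.sum_le_sum fun r' _ => Finset.sum_le_sum (hcube r')
      _ ≤ ∑ _r : Fin S.m, ∑ _p : Fin S.P, b ^ 3 :=
          Finset.sum_le_sum fun _ _ =>
            Finset.sum_le_sum_of_subset_of_nonneg (Finset.erase_subset _ _) fun _ _ _ => pow_nonneg hb0 3
      _ = _ := by simp [mul_assoc]
  have hy : |S.y i| = 1 := by rcases S.hy i with h | h <;> rw [h] <;> norm_num
  have := neg_abs_le (S.y i * ∑ r, ∑ p ∈ Finset.univ.erase (S.sig i),
    dot (S.w t r) (S.x i p) ^ 3)
  rw [abs_mul, hy, one_mul] at this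
  linarith

/-- The logarithmic factor `log (T N m P / δ)`. -/
def logFactor (S : Setting) : ℝ := Real.log ((S.T : ℝ) * S.N * S.m * S.P / S.delta)

/-- The logarithmic factor `log (T d N m P / δ)`. -/
def logFactorDim (S : Setting) : ℝ := Real.log ((S.T : ℝ) * S.d * S.N * S.m * S.P / S.delta)

lemma one_le_natCast_of_pos {n : ℕ} (h : 0 < n) : (1 : ℝ) ≤ n := by exact_mod_cast h

lemma one_le_horizon {S : Setting} {C : ℝ} (h : S.CondH C) : (1 : ℝ) ≤ S.T := by
  obtain ⟨hC, hT, -⟩ := h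
  have hN := one_le_natCast_of_pos S.hN
  have hd := one_le_natCast_of_pos S.hd
  have := S.heta
  have := S.hsigma0
  have := S.hsigman
  have hpos : (0 : ℝ) < S.T := lt_of_lt_of_le (by positivity) hT
  exact one_le_natCast_of_pos (by exact_mod_cast hpos)

lemma two_le_patches {S : Setting} {C : ℝ} (h : S.CondH C) : (2 : ℝ) ≤ S.P := by
  obtain ⟨-, -, -, -, -, -, -, -, -, -, hP, -⟩ := h
  exact_mod_cast hP

lemma log_two_le_logFactor {S : Setting} {C : ℝ} (h : S.CondH C) :
    Real.log 2 ≤ logFactor S := by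
  have hT := one_le_horizon h
  have hP := two_le_patches h
  have hN := one_le_natCast_of_pos S.hN
  have hm := one_le_natCast_of_pos S.hm
  have hδ := S.hdelta0
  refine Real.log_le_log (by norm_num) ?_
  rw [le_div_iff₀ hδ]
  calc 2 * S.delta ≤ 1 * 1 * 1 * 2 := by linarith [S.hdelta1]
    _ ≤ _ := by gcongr

lemma log_horizon_le_logFactor {S : Setting} {C : ℝ} (h : S.CondH C) :
    Real.log S.T ≤ logFactor S := by
  have hT := one_le_horizon h
  have hP := one_le_natCast_of_pos S.hP
  have hN := one_le_natCast_of_pos S.hN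
  have hm := one_le_natCast_of_pos S.hm
  have hδ := S.hdelta0
  refine Real.log_le_log (by linarith) ?_
  rw [le_div_iff₀ hδ]
  calc (S.T : ℝ) * S.delta ≤ S.T * 1 * 1 * 1 := by nlinarith [S.hdelta1]
    _ ≤ _ := by gcongr

lemma logFactor_le_logFactorDim {S : Setting} {C : ℝ} (h : S.CondH C) :
    logFactor S ≤ logFactorDim S := by
  have hT := one_le_horizon h
  have hP := one_le_natCast_of_pos S.hP
  have hN := one_le_natCast_of_pos S.hN
  have hm := one_le_natCast_of_pos S.hm
  have hd := one_le_natCast_of_pos S.hd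
  have hδ := S.hdelta0
  refine Real.log_le_log (by positivity) ?_
  gcongr
  nlinarith

lemma log_sixteen_mul_le {S : Setting} {C : ℝ} (h : S.CondH C) {a : ℝ} (ha : 0 < a) :
    Real.log (16 * a) ≤ 4 * logFactor S + Real.log a := by
  have h16 : Real.log 16 = 4 * Real.log 2 := by
    rw [show (16 : ℝ) = 2 ^ 4 by norm_num, Real.log_pow]; norm_num
  rw [Real.log_mul (by norm_num) ha.ne', h16]
  linarith [log_two_le_logFactor h]

lemma log_width_le {S : Setting} {C : ℝ} (h : S.CondH C) :
    Real.log ((16 : ℝ) * S.m / S.delta) ≤ 5 * logFactorDim S := by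
  have hT := one_le_horizon h
  have hP := one_le_natCast_of_pos S.hP
  have hN := one_le_natCast_of_pos S.hN
  have hm := one_le_natCast_of_pos S.hm
  have hδ := S.hdelta0
  have h1 : Real.log (S.m / S.delta) ≤ logFactor S := by
    refine Real.log_le_log (by positivity) ?_
    gcongr
    calc (S.m : ℝ) = 1 * 1 * S.m * 1 := by ring
      _ ≤ _ := by gcongr
  have h2 := log_sixteen_mul_le h (a := S.m / S.delta) (by positivity)
  rw [← mul_div_assoc] at h2
  linarith [logFactor_le_logFactorDim h]

lemma log_init_noise_le {S : Setting} {C : ℝ} (h : S.CondH C) :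
    Real.log ((16 : ℝ) * S.N * S.m * S.P / S.delta) ≤ 5 * logFactorDim S := by
  have hT := one_le_horizon h
  have hP := one_le_natCast_of_pos S.hP
  have hN := one_le_natCast_of_pos S.hN
  have hm := one_le_natCast_of_pos S.hm
  have hδ := S.hdelta0
  have h1 : Real.log (S.N * S.m * S.P / S.delta) ≤ logFactor S := by
    refine Real.log_le_log (by positivity) ?_
    gcongr
    nlinarith
  have h2 := log_sixteen_mul_le h (a := S.N * S.m * S.P / S.delta) (by positivity)
  rw [← mul_div_assoc, ← mul_assoc, ← mul_assoc] at h2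
  linarith [logFactor_le_logFactorDim h]

lemma log_noise_pair_le {S : Setting} {C : ℝ} (h : S.CondH C) :
    Real.log ((16 : ℝ) * S.N ^ 2 * S.P ^ 2 / S.delta) ≤ 6 * logFactor S := by
  have hT := one_le_horizon h
  have hP := one_le_natCast_of_pos S.hP
  have hN := one_le_natCast_of_pos S.hN
  have hm := one_le_natCast_of_pos S.hm
  have hδ := S.hdelta0
  have h1 : Real.log (S.N ^ 2 * S.P ^ 2 / S.delta) ≤ 2 * logFactor S := by
    have hsq : 2 * logFactor S =
        Real.log (((S.T : ℝ) * S.N * S.m * S.P / S.delta) ^ 2) := by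
      rw [Real.log_pow]; rfl
    rw [hsq]
    refine Real.log_le_log (by positivity) ?_
    have hbase : (S.N : ℝ) * S.P ≤ S.T * S.N * S.m * S.P := by
      calc (S.N : ℝ) * S.P = 1 * S.N * 1 * S.P := by ring
        _ ≤ _ := by gcongr
    rw [div_pow]
    calc (S.N : ℝ) ^ 2 * S.P ^ 2 / S.delta = (S.N * S.P) ^ 2 / S.delta := by ring
      _ ≤ (S.T * S.N * S.m * S.P) ^ 2 / S.delta ^ 2 := by
        gcongr
        nlinarith [S.hdelta1]
  have h2 := log_sixteen_mul_le h (a := S.N ^ 2 * S.P ^ 2 / S.delta) (by positivity)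
  rw [← mul_div_assoc, ← mul_assoc] at h2
  linarith

lemma logFactor_pos {S : Setting} {C : ℝ} (h : S.CondH C) : 0 < logFactor S :=
  (Real.log_pos one_lt_two).trans_le (log_two_le_logFactor h)

lemma logFactorDim_pos {S : Setting} {C : ℝ} (h : S.CondH C) : 0 < logFactorDim S :=
  (logFactor_pos h).trans_le (logFactor_le_logFactorDim h)

/-- A bound of the form `x ≤ C⁻¹ * (1 / a) / l` cleared of denominators. -/
lemma mul_mul_le_inv_of_le {x C M a l : ℝ} (hC : 0 < C) (ha : 0 < a) (hl : 0 < l)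
    (hM : M ≤ 1 / a) (h : x ≤ C⁻¹ * M / l) : x * a * l ≤ C⁻¹ := by
  have h1 : x ≤ C⁻¹ * (1 / a) / l := h.trans (by gcongr)
  calc x * a * l ≤ C⁻¹ * (1 / a) / l * a * l := by gcongr
    _ = C⁻¹ := by field_simp

lemma eta_mul_alpha_sq_le {S : Setting} {C : ℝ} (h : S.CondH C) :
    S.eta * S.alpha ^ 2 * logFactor S ≤ C⁻¹ := by
  have hl := logFactor_pos h
  have hα := S.halpha
  obtain ⟨hC, -, -, -, -, hη, -⟩ := h
  exact mul_mul_le_inv_of_le (by linarith) (by positivity) hl (min_le_right _ _) hη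

lemma eta_mul_noise_le {S : Setting} {C : ℝ} (h : S.CondH C) :
    S.eta * (S.sigman ^ 2 * S.d) * logFactor S ≤ C⁻¹ := by
  have hl := logFactor_pos h
  have hσ := S.hsigman
  have hd := one_le_natCast_of_pos S.hd
  obtain ⟨hC, -, -, -, -, hη, -⟩ := h
  exact mul_mul_le_inv_of_le (by linarith) (by positivity) hl
    ((min_le_left _ _).trans (min_le_right _ _)) hη

lemma rpow_two_thirds_pow_three {a : ℝ} (ha : 0 ≤ a) : (a ^ ((2 : ℝ) / 3)) ^ 3 = a ^ 2 := by
  rw [← Real.rpow_natCast, ← Real.rpow_mul ha, ← Real.rpow_natCast]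
  norm_num

lemma init_signal_cube_le {S : Setting} {C : ℝ} (h : S.CondH C) :
    (S.sigma0 * S.alpha * logFactorDim S) ^ 3 * S.m ^ 2 ≤ C⁻¹ ^ 3 := by
  have hl := logFactorDim_pos h
  have hα := S.halpha
  have hσ0 := S.hsigma0
  have hm := one_le_natCast_of_pos S.hm
  obtain ⟨hC, -, -, -, hσ, -⟩ := h
  have hle := mul_mul_le_inv_of_le (a := S.alpha * (S.m : ℝ) ^ ((2 : ℝ) / 3)) (by linarith)
    (by positivity) hl ((min_le_left _ _).trans (min_le_right _ _)) hσ
  calc _ = (S.sigma0 * (S.alpha * (S.m : ℝ) ^ ((2 : ℝ) / 3)) * logFactorDim S) ^ 3 := by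
        rw [← rpow_two_thirds_pow_three (by positivity : (0 : ℝ) ≤ S.m)]; ring
    _ ≤ _ := by gcongr

lemma init_noise_cube_le {S : Setting} {C : ℝ} (h : S.CondH C) :
    (S.sigma0 * S.sigman * Real.sqrt S.d * logFactorDim S) ^ 3 * (S.m ^ 2 * S.P ^ 2) ≤
      C⁻¹ ^ 3 := by
  have hl := logFactorDim_pos h
  have hσn := S.hsigman
  have hσ0 := S.hsigma0
  have hm := one_le_natCast_of_pos S.hm
  have hP := one_le_natCast_of_pos S.hP
  have hd := one_le_natCast_of_pos S.hd
  obtain ⟨hC, -, -, -, hσ, -⟩ := h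
  have hle := mul_mul_le_inv_of_le (a := (S.m : ℝ) ^ ((2 : ℝ) / 3) * (S.P : ℝ) ^ ((2 : ℝ) / 3) *
    S.sigman * Real.sqrt S.d) (by linarith)
    (by positivity) hl ((min_le_left _ _).trans (min_le_left _ _)) hσ
  calc _ = (S.sigma0 * ((S.m : ℝ) ^ ((2 : ℝ) / 3) * (S.P : ℝ) ^ ((2 : ℝ) / 3) *
        S.sigman * Real.sqrt S.d) * logFactorDim S) ^ 3 := by
        rw [← rpow_two_thirds_pow_three (by positivity : (0 : ℝ) ≤ S.m),
          ← rpow_two_thirds_pow_three (by positivity : (0 : ℝ) ≤ S.P)]; ring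
    _ ≤ _ := by gcongr

/-- The horizon constraint forces a polynomially large number of iterations. -/
lemma one_le_log_horizon {S : Setting} {C : ℝ} (hC : 10 ^ 16 ≤ C) (h : S.CondH C) :
    1 ≤ Real.log S.T := by
  have h1 := eta_mul_noise_le h
  have h2 := init_noise_cube_le h
  have hl := (Real.log_two_gt_d9).le.trans (log_two_le_logFactor h)
  have hl' := hl.trans (logFactor_le_logFactorDim h)
  have hσn := S.hsigman
  have hσ0 := S.hsigma0
  have hη := S.heta
  have hm := one_le_natCast_of_pos S.hm
  have hP := one_le_natCast_of_pos S.hP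
  have hd := one_le_natCast_of_pos S.hd
  have hN := one_le_natCast_of_pos S.hN
  have hCpos : (0 : ℝ) < C := by linarith
  have hCi : C⁻¹ ≤ 1 := inv_le_one_of_one_le₀ (by linarith)
  have hCi0 : 0 < C⁻¹ := by positivity
  set s := S.sigma0 * S.sigman * Real.sqrt S.d with hs
  have hs0 : 0 < s := by positivity
  have hA0 : 0 < S.eta * (S.sigman ^ 2 * S.d) := by positivity
  have hA : S.eta * (S.sigman ^ 2 * S.d) ≤ 2 := by nlinarith
  have hmP : (1 : ℝ) ≤ S.m ^ 2 * S.P ^ 2 := by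
    have h3 : (1 : ℝ) ≤ S.m ^ 2 := one_le_pow₀ hm
    have h4 : (1 : ℝ) ≤ S.P ^ 2 := one_le_pow₀ hP
    nlinarith
  have hsL : s * logFactorDim S ≤ C⁻¹ := by
    refine le_of_pow_le_pow_left₀ (n := 3) (by norm_num) hCi0.le (le_trans ?_ h2)
    exact le_mul_of_one_le_right (by positivity) hmP
  have hs2 : s ≤ 2 := by nlinarith
  have hT := h.2.1
  have hden : S.eta * S.sigma0 * S.sigman ^ 3 * ((S.d : ℝ) * Real.sqrt S.d) ≤ 4 := by
    calc _ = S.eta * (S.sigman ^ 2 * S.d) * s := by rw [hs]; ring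
      _ ≤ 2 * 2 := by gcongr
      _ = 4 := by norm_num
  have hT3 : (3 : ℝ) ≤ S.T := by
    refine le_trans ?_ hT
    rw [le_div_iff₀ (by positivity)]
    calc 3 * (S.eta * S.sigma0 * S.sigman ^ 3 * ((S.d : ℝ) * Real.sqrt S.d)) ≤ 3 * 4 := by
          gcongr
      _ ≤ 10 ^ 16 * 1 := by norm_num
      _ ≤ C * S.N := by gcongr
  rw [Real.le_log_iff_exp_le (by linarith)]
  linarith [Real.exp_one_lt_d9]

lemma two_le_dim {S : Setting} {C : ℝ} (hC : 10 ^ 16 ≤ C) (h : S.CondH C) : 2 ≤ S.d := by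
  have hl : 1 ≤ logFactor S := (one_le_log_horizon hC h).trans (log_horizon_le_logFactor h)
  have hm := one_le_natCast_of_pos S.hm
  have hP := one_le_natCast_of_pos S.hP
  have hN := one_le_natCast_of_pos S.hN
  have hd := h.2.2.1
  have : (2 : ℝ) ≤ S.d := by
    refine le_trans ?_ hd
    calc (2 : ℝ) ≤ 10 ^ 16 * 1 ^ 2 * 1 ^ 2 * 1 ^ 2 * 1 ^ 4 := by norm_num
      _ ≤ C * S.m ^ 2 * S.P ^ 2 * S.N ^ 2 * logFactor S ^ 4 := by gcongr
  exact_mod_cast this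

lemma sqrt_dim_ge {S : Setting} {C : ℝ} (h : S.CondH C) :
    Real.sqrt C * S.m * S.P * S.N * logFactor S ^ 2 ≤ Real.sqrt S.d := by
  have hl := logFactor_pos h
  refine Real.le_sqrt_of_sq_le (le_trans (le_of_eq ?_) h.2.2.1)
  have hC : Real.sqrt C ^ 2 = C := Real.sq_sqrt (by linarith [h.1])
  unfold logFactor
  linear_combination (S.m ^ 2 * S.P ^ 2 * S.N ^ 2 *
    (Real.log ((S.T : ℝ) * S.N * S.m * S.P / S.delta)) ^ 4) * hC

lemma pun_mul_card_le (S : Setting) : S.pun * S.N ≤ S.N := by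
  have hN := one_le_natCast_of_pos S.hN
  have : S.SU.card ≤ S.N := by simpa using Finset.card_le_univ S.SU
  unfold Setting.pun
  rw [div_mul_cancel₀ _ (by positivity)]
  exact_mod_cast this

lemma pun_nonneg (S : Setting) : 0 ≤ S.pun := by
  unfold Setting.pun; positivity

lemma sqrt_mul_le_three_mul {c l : ℝ} (hl : 1 ≤ l) (hc : c ≤ 9 * l) : Real.sqrt c ≤ 3 * l := by
  refine Real.sqrt_le_iff.mpr ⟨by positivity, ?_⟩
  nlinarith

/-- The initialization part of the noise-stability bound is negligible. -/
lemma noise_init_part_cube_le {S : Setting} {C : ℝ} (hC : 10 ^ 16 ≤ C) (h : S.CondH C) :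
    S.m * S.P * (3 * S.sigma0 * S.sigman *
      Real.sqrt ((S.d : ℝ) * Real.log ((16 : ℝ) * S.N * S.m * S.P / S.delta))) ^ 3 ≤ 1 / 100 := by
  have hl : 1 ≤ logFactorDim S := (one_le_log_horizon hC h).trans
    ((log_horizon_le_logFactor h).trans (logFactor_le_logFactorDim h))
  have hσn := S.hsigman
  have hσ0 := S.hsigma0
  have hm := one_le_natCast_of_pos S.hm
  have hP := one_le_natCast_of_pos S.hP
  have hs := sqrt_mul_le_three_mul hl ((log_init_noise_le h).trans (by linarith))
  rw [Real.sqrt_mul (by positivity)]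
  have hCi0 : 0 ≤ C⁻¹ := by rw [inv_nonneg]; linarith
  have hCi : C⁻¹ ≤ 1 / 10 ^ 16 := by
    rw [one_div]; exact inv_anti₀ (by norm_num) hC
  calc _ ≤ (S.m ^ 2 * S.P ^ 2) * (3 * S.sigma0 * S.sigman *
        (Real.sqrt S.d * (3 * logFactorDim S))) ^ 3 := by
        gcongr
        · exact le_self_pow₀ hm (by norm_num)
        · exact le_self_pow₀ hP (by norm_num)
    _ = 729 * ((S.sigma0 * S.sigman * Real.sqrt S.d * logFactorDim S) ^ 3 *
        (S.m ^ 2 * S.P ^ 2)) := by ring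
    _ ≤ 729 * C⁻¹ ^ 3 := by gcongr; exact init_noise_cube_le h
    _ ≤ 729 * (1 / 10 ^ 16) ^ 3 := by gcongr
    _ ≤ _ := by norm_num

/-- The memorization part of the noise-stability bound is negligible against `log T`. -/
lemma noise_memorization_part_cube_le {S : Setting} {C : ℝ} (hC : 10 ^ 16 ≤ C)
    (h : S.CondH C) :
    S.m * S.P * (21 * S.pun * S.N * S.P * Real.log S.T ^ ((1 : ℝ) / 3) / Real.sqrt S.d *
      Real.sqrt (Real.log ((16 : ℝ) * S.N ^ 2 * S.P ^ 2 / S.delta))) ^ 3 ≤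
      Real.log S.T / 100 := by
  have hT := one_le_log_horizon hC h
  have hl : 1 ≤ logFactor S := hT.trans (log_horizon_le_logFactor h)
  have hm := one_le_natCast_of_pos S.hm
  have hP := one_le_natCast_of_pos S.hP
  have hN := one_le_natCast_of_pos S.hN
  have hd := one_le_natCast_of_pos S.hd
  have hs := sqrt_mul_le_three_mul hl ((log_noise_pair_le h).trans (by linarith))
  have hdim := sqrt_dim_ge h
  have hPC : (S.P : ℝ) ≤ C := by
    obtain ⟨-, -, -, -, -, -, -, -, -, -, -, hP⟩ := h
    exact hP
  have hC0 : (0 : ℝ) < C := by linarith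
  have hR : (10 : ℝ) ^ 8 ≤ Real.sqrt C := Real.le_sqrt_of_sq_le (by norm_num; linarith)
  have hRsq : Real.sqrt C ^ 2 = C := Real.sq_sqrt hC0.le
  set R := Real.sqrt C
  set c := Real.log S.T ^ ((1 : ℝ) / 3) with hc
  have hc0 : 0 ≤ c := by positivity
  have hc3 : c ^ 3 = Real.log S.T := by
    rw [hc, ← Real.rpow_natCast, ← Real.rpow_mul (by linarith)]; norm_num
  have hR0 : 0 < R := by linarith
  have hpun := pun_nonneg S
  have hbase : 21 * S.pun * S.N * S.P * c / Real.sqrt S.d *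
      Real.sqrt (Real.log ((16 : ℝ) * S.N ^ 2 * S.P ^ 2 / S.delta)) ≤ 63 * c / (R * S.m) := by
    calc _ ≤ 21 * S.N * S.P * c / (R * S.m * S.P * S.N * logFactor S ^ 2) *
          (3 * logFactor S) := by
          have h1 : 21 * S.pun * S.N * S.P * c ≤ 21 * S.N * S.P * c := by
            have := pun_mul_card_le S
            calc _ = 21 * (S.pun * S.N) * S.P * c := by ring
              _ ≤ _ := by gcongr
          gcongr
      _ = 63 * c / (R * S.m) / logFactor S := by field_simp; ring
      _ ≤ 63 * c / (R * S.m) := div_le_self (by positivity) hl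
  calc _ ≤ S.m * S.P * (63 * c / (R * S.m)) ^ 3 := by gcongr
    _ = 250047 * Real.log S.T * (S.P / R ^ 2) / (R * S.m ^ 2) := by
        rw [← hc3]; field_simp; ring
    _ ≤ 250047 * Real.log S.T * 1 / (10 ^ 8 * 1 ^ 2) := by
        gcongr
        rw [hRsq]
        exact (div_le_one hC0).mpr hPC
    _ ≤ _ := by linarith

/-- The total noise contribution to a learnable margin under the noise-stability bound. -/
lemma noise_stability_cube_le {S : Setting} {C : ℝ} (hC : 10 ^ 16 ≤ C) (h : S.CondH C) :
    S.m * S.P * (3 * S.sigma0 * S.sigman *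
          Real.sqrt ((S.d : ℝ) * Real.log ((16 : ℝ) * S.N * S.m * S.P / S.delta)) +
        21 * S.pun * S.N * S.P * Real.log S.T ^ ((1 : ℝ) / 3) / Real.sqrt S.d *
          Real.sqrt (Real.log ((16 : ℝ) * S.N ^ 2 * S.P ^ 2 / S.delta))) ^ 3 ≤
      Real.log S.T := by
  have hT := one_le_log_horizon hC h
  have hσn := S.hsigman
  have hσ0 := S.hsigma0
  have hpun := pun_nonneg S
  have h1 := noise_init_part_cube_le hC h
  have h2 := noise_memorization_part_cube_le hC h
  set a := 3 * S.sigma0 * S.sigman *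
    Real.sqrt ((S.d : ℝ) * Real.log ((16 : ℝ) * S.N * S.m * S.P / S.delta))
  set b := 21 * S.pun * S.N * S.P * Real.log S.T ^ ((1 : ℝ) / 3) / Real.sqrt S.d *
    Real.sqrt (Real.log ((16 : ℝ) * S.N ^ 2 * S.P ^ 2 / S.delta))
  have ha : 0 ≤ a := by positivity
  have hb : 0 ≤ b := by positivity
  have hab : (a + b) ^ 3 ≤ 4 * (a ^ 3 + b ^ 3) := by
    nlinarith [mul_nonneg (add_nonneg ha hb) (sq_nonneg (a - b))]
  calc (S.m : ℝ) * S.P * (a + b) ^ 3 ≤ S.m * S.P * (4 * (a ^ 3 + b ^ 3)) := by gcongr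
    _ = 4 * (S.m * S.P * a ^ 3 + S.m * S.P * b ^ 3) := by ring
    _ ≤ _ := by linarith

/-- The initial signal correlations are negligible, even after summing their cubes. -/
lemma init_signal_scale_le {S : Setting} {C : ℝ} (hC : 10 ^ 16 ≤ C) (h : S.CondH C) :
    S.m * (S.sigma0 * Real.sqrt (2 * Real.log ((16 : ℝ) * S.m / S.delta)) * S.alpha) ^ 3 ≤ 1 := by
  have hl : 1 ≤ logFactorDim S := (one_le_log_horizon hC h).trans
    ((log_horizon_le_logFactor h).trans (logFactor_le_logFactorDim h))
  have hσ0 := S.hsigma0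
  have hα := S.halpha
  have hm := one_le_natCast_of_pos S.hm
  have hs : Real.sqrt (2 * Real.log ((16 : ℝ) * S.m / S.delta)) ≤ 4 * logFactorDim S := by
    refine Real.sqrt_le_iff.mpr ⟨by positivity, ?_⟩
    nlinarith [log_width_le h]
  have hCi0 : 0 ≤ C⁻¹ := by rw [inv_nonneg]; linarith
  have hCi : C⁻¹ ≤ 1 / 10 ^ 16 := by
    rw [one_div]; exact inv_anti₀ (by norm_num) hC
  calc _ ≤ S.m ^ 2 * (S.sigma0 * (4 * logFactorDim S) * S.alpha) ^ 3 := by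
        gcongr
        exact le_self_pow₀ hm (by norm_num)
    _ = 64 * ((S.sigma0 * S.alpha * logFactorDim S) ^ 3 * S.m ^ 2) := by ring
    _ ≤ 64 * C⁻¹ ^ 3 := by gcongr; exact init_signal_cube_le h
    _ ≤ 64 * (1 / 10 ^ 16) ^ 3 := by gcongr
    _ ≤ _ := by norm_num

/-- Once some filter has signal coordinate above `2 (log T)^{1/3} / α`, every learnable margin is
at least `2 log T`. -/
lemma two_mul_log_le_marg {S : Setting} {C : ℝ} (hC : 10 ^ 16 ≤ C) (hdyn : S.ATDyn)
    (hE : S.EventE) (h : S.CondH C) {t : ℕ} (hNS : S.NS t) {r : Fin S.m}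
    (hr : 2 * Real.log S.T ^ ((1 : ℝ) / 3) / S.alpha < S.wsig t r) {i : Fin S.N}
    (hi : i ∈ S.SL) : 2 * Real.log S.T ≤ S.marg t i := by
  have hT := one_le_log_horizon hC h
  have hα := S.halpha
  have hσ0 := S.hsigma0
  have hσn := S.hsigman
  have hpun := pun_nonneg S
  have hinit := init_signal_scale_le hC h
  have hnoise := noise_stability_cube_le hC h
  obtain ⟨-, -, -, -, hP5, -⟩ := hE
  set A := S.sigma0 * Real.sqrt (2 * Real.log ((16 : ℝ) * S.m / S.delta))
  have hA0 : 0 ≤ A := by positivity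
  have hadv := advSignal_pos S t hi
  have hadv' := advSignal_le S t hi
  have hκ : ∀ r', -((A * S.alpha) ^ 3) ≤ (S.wsig t r' * advSignal S t i) ^ 3 := by
    intro r'
    have h0 : -A ≤ S.wsig t r' := by
      have h1 := hP5 r'
      rw [dot_e1] at h1
      exact (neg_le_of_abs_le h1).trans
        (wsig_monotone S hdyn (two_le_dim hC h) r' (Nat.zero_le t))
    have h2 : -(A * S.alpha) ≤ S.wsig t r' * advSignal S t i := by nlinarith
    rw [← Odd.neg_pow (by decide)]
    exact (Odd.strictMono_pow (by decide : Odd 3)).monotone h2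
  have hlow := marg_lower_bound S t hi r (by positivity) (by positivity) hκ
    (fun r' j hj => hNS r' i hi j hj)
  have hε : S.eps ≤ S.alpha / 10 := by
    obtain ⟨-, -, -, -, -, -, -, he, -⟩ := h
    have hCi : C⁻¹ ≤ 1 / 10 := by
      rw [one_div]; exact inv_anti₀ (by norm_num) (by linarith)
    calc S.eps ≤ C⁻¹ * min S.alpha (1 / (S.m * S.sigma0 * S.d)) := he.le
      _ ≤ 1 / 10 * S.alpha := by
        gcongr
        exact min_le_left _ _
      _ = _ := by ring
  set c := Real.log S.T ^ ((1 : ℝ) / 3) with hc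
  have hc0 : 0 ≤ c := by positivity
  have hc3 : c ^ 3 = Real.log S.T := by
    rw [hc, ← Real.rpow_natCast, ← Real.rpow_mul (by linarith)]; norm_num
  have hsig : 5 * Real.log S.T ≤ (S.wsig t r * advSignal S t i) ^ 3 := by
    have hge : 9 / 10 * S.alpha ≤ advSignal S t i := by
      have := (S.hadvlearn t i hi).1
      unfold advSignal
      linarith
    calc 5 * Real.log S.T ≤ (2 * c / S.alpha * (9 / 10 * S.alpha)) ^ 3 := by
          have : 2 * c / S.alpha * (9 / 10 * S.alpha) = 9 / 5 * c := by field_simp; ring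
          rw [this, mul_pow, hc3]
          linarith
      _ ≤ _ := by
          have hw : 0 ≤ S.wsig t r := le_trans (by positivity) hr.le
          gcongr
  linarith

/-- Signal weight bound for every sufficiently large constant in Condition (H). -/
theorem wsig_le_of_condH {S : Setting} {C : ℝ} (hC : 10 ^ 16 ≤ C) (hdyn : S.ATDyn)
    (hE : S.EventE) (h : S.CondH C) {t : ℕ} (ht : t ≤ S.T) (hNS : ∀ τ ≤ t, S.NS τ)
    (r : Fin S.m) : S.wsig t r ≤ 3 * Real.log S.T ^ ((1 : ℝ) / 3) / S.alpha := by
  have hlogT := one_le_log_horizon hC h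
  have hT := one_le_horizon h
  have hα := S.halpha
  have hη := S.heta
  have hd := two_le_dim hC h
  have hlog := log_horizon_le_logFactor h
  set c := Real.log S.T ^ ((1 : ℝ) / 3) with hc
  have hc1 : 1 ≤ c := Real.one_le_rpow hlogT (by norm_num)
  have hcT : c ≤ Real.log S.T :=
    (Real.rpow_le_rpow_of_exponent_le hlogT (by norm_num)).trans_eq (Real.rpow_one _)
  set B := c / S.alpha with hB
  have hB0 : 0 < B := by positivity
  have hrate : S.eta * B * S.alpha ^ 3 ≤ 1 / 1000 := by
    have hCi : C⁻¹ ≤ 1 / 1000 := by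
      rw [one_div]; exact inv_anti₀ (by norm_num) (by linarith)
    calc S.eta * B * S.alpha ^ 3 = S.eta * S.alpha ^ 2 * c := by rw [hB]; field_simp
      _ ≤ S.eta * S.alpha ^ 2 * logFactor S := by gcongr; exact hcT.trans hlog
      _ ≤ 1 / 1000 := (eta_mul_alpha_sq_le h).trans hCi
  have hinit : -B ≤ S.wsig 0 r ∧ S.wsig 0 r ≤ B := by
    obtain ⟨-, -, -, -, hP5, -⟩ := hE
    have h1 := hP5 r
    rw [dot_e1] at h1
    refine abs_le.mp (h1.trans ?_)
    have hs := init_signal_scale_le hC h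
    set A := S.sigma0 * Real.sqrt (2 * Real.log ((16 : ℝ) * S.m / S.delta))
    have hA0 : 0 ≤ A := by have := S.hsigma0; positivity
    have hA1 : A * S.alpha ≤ 1 := by
      refine le_of_pow_le_pow_left₀ (n := 3) (by norm_num) zero_le_one ?_
      rw [one_pow]
      exact (le_mul_of_one_le_left (by positivity) (one_le_natCast_of_pos S.hm)).trans hs
    rw [hB, le_div_iff₀ hα]
    exact hA1.trans hc1
  have hstep : ∀ τ, τ ≤ t → S.wsig τ r ≤ 5 / 2 * B + τ * (B / (2 * S.T)) := by
    intro τ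
    induction τ with
    | zero => intro _; push_cast; linarith [hinit.2]
    | succ τ ih =>
      intro hτ
      have hprev := ih (by omega)
      have hτT : (τ : ℝ) ≤ S.T := by exact_mod_cast (by omega : τ ≤ S.T)
      have hinc : 0 ≤ B / (2 * S.T) := by positivity
      have hlow : -B ≤ S.wsig τ r := hinit.1.trans (wsig_monotone S hdyn hd r (Nat.zero_le τ))
      push_cast
      rcases le_or_gt (S.wsig τ r) (2 * B) with hsmall | hbig
      · have hgrow := wsig_succ_le S hdyn hd τ r zero_le_one fun i _ => psi_le_one _
        have hsq : S.wsig τ r ^ 2 ≤ 4 * B ^ 2 := by nlinarith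
        have hle : 3 * S.eta * 1 * S.wsig τ r ^ 2 * S.alpha ^ 3 ≤ B / 2 := by
          calc _ ≤ 3 * S.eta * 1 * (4 * B ^ 2) * S.alpha ^ 3 := by gcongr
            _ = 12 * (S.eta * B * S.alpha ^ 3) * B := by ring
            _ ≤ 12 * (1 / 1000) * B := by gcongr
            _ ≤ _ := by linarith
        have : 0 ≤ ((τ : ℝ) + 1) * (B / (2 * S.T)) := by positivity
        linarith
      · have hq : ∀ i ∈ S.SL, psi (S.marg τ i) ≤ ((S.T : ℝ) ^ 2)⁻¹ := by
          intro i hi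
          have hm := two_mul_log_le_marg hC hdyn hE h (hNS τ (by omega)) (r := r)
            (by rw [← hc, mul_div_assoc]; exact hbig) hi
          calc _ ≤ Real.exp (-S.marg τ i) := psi_le_exp_neg _
            _ ≤ Real.exp (-(2 * Real.log S.T)) := by gcongr
            _ = _ := by
              rw [Real.exp_neg, show 2 * Real.log S.T = Real.log ((S.T : ℝ) ^ 2) by
                rw [Real.log_pow]; norm_num, Real.exp_log (by positivity)]
        have hgrow := wsig_succ_le S hdyn hd τ r (by positivity) hq
        have hup : S.wsig τ r ≤ 3 * B := by
          have : (τ : ℝ) * (B / (2 * S.T)) ≤ B / 2 := by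
            calc _ ≤ (S.T : ℝ) * (B / (2 * S.T)) := by gcongr
              _ = _ := by field_simp
          linarith
        have hle : 3 * S.eta * ((S.T : ℝ) ^ 2)⁻¹ * S.wsig τ r ^ 2 * S.alpha ^ 3 ≤
            B / (2 * S.T) := by
          have hw0 : 0 ≤ S.wsig τ r := by linarith
          have hinv : ((S.T : ℝ) ^ 2)⁻¹ ≤ (S.T : ℝ)⁻¹ :=
            inv_anti₀ (by positivity) (le_self_pow₀ hT (by norm_num))
          calc _ ≤ 3 * S.eta * (S.T : ℝ)⁻¹ * (3 * B) ^ 2 * S.alpha ^ 3 := by gcongr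
            _ = 27 * (S.eta * B * S.alpha ^ 3) * B * (S.T : ℝ)⁻¹ := by ring
            _ ≤ 27 * (1 / 1000) * B * (S.T : ℝ)⁻¹ := by gcongr
            _ ≤ 1 / 2 * B * (S.T : ℝ)⁻¹ := by gcongr; norm_num
            _ = _ := by field_simp
        linarith
  have hfin := hstep t le_rfl
  have htT : (t : ℝ) ≤ S.T := by exact_mod_cast ht
  have hlast : (t : ℝ) * (B / (2 * S.T)) ≤ B / 2 := by
    calc _ ≤ (S.T : ℝ) * (B / (2 * S.T)) := by gcongr
      _ = _ := by field_simp
  rw [mul_div_assoc]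
  linarith

/-- Signal weight bound. On the event `E`, under Condition (H), if
the noise-stability bound holds at every iteration up to `t ≤ T`, then every signal
coordinate satisfies `w_{r,1}^{(t)} ≤ 3 (log T)^{1/3} / α`. -/
theorem stmt6 :
    ∃ C : ℝ, 0 < C ∧
      ∀ S : Setting, S.ATDyn → S.EventE → S.CondH C → (S.SU.Nonempty → S.SparseRegime C) →
        ∀ t, t ≤ S.T → (∀ τ, τ ≤ t → S.NS τ) →
          ∀ r, S.wsig t r ≤ 3 * Real.log S.T ^ ((1 : ℝ) / 3) / S.alpha := by
  exact ⟨10 ^ 16, by norm_num, fun S hdyn hE hH _ t ht hNS r =>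
    wsig_le_of_condH le_rfl hdyn hE hH ht hNS r⟩

end AD

end
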